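/- Let (𝔭_j)_{j∈ℕ} be nonnegative reals with Σ_{j=0}^∞ 𝔭_j ≤ 1 and 𝔭₀ = 0. For any initial state i ∈ ℕ, let μ_k^{(i)} be the distribution sequence of the boundary random walk started at i. Then for every positive integer m, Σ_{k=0}^{m−1} μ_k^{(i)}(0) ≤ e / √(1 − e^{−2/m}). -/

import Mathlib

/-- The substochastic transition matrix of a boundary random walk on ℕ with
jumping measure `p` at the boundary state `0`. -/
noncomputable def Ptrans (p : ℕ → ℝ) : ℕ → ℕ → ℝ
  | 0, j => p j
  | i + 1, j => if j = i ∨ j = i + 2 then 1 / 2 else 0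

/-- The (substochastic) distribution at time `k` of the boundary random walk
with jumping measure `p` started at `i₀`. -/
noncomputable def occ (p : ℕ → ℝ) (i₀ : ℕ) : ℕ → ℕ → ℝ
  | 0 => fun j => if j = i₀ then 1 else 0
  | k + 1 => fun j => ∑' l : ℕ, occ p i₀ k l * Ptrans p l j

theorem hs_congr {f g : ℕ → ℝ} {a : ℝ} (h : ∀ j, f j = g j) (hg : HasSum g a) :
    HasSum f a := (funext h : f = g) ▸ hg

/-- The contribution of upward steps. -/
noncomputable def upPart (a : ℕ → ℝ) : ℕ → ℝ
  | 0 => 0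
  | 1 => 0
  | j + 2 => a (j + 1)

theorem occ_succ_eq (p : ℕ → ℝ) (i k j : ℕ) :
    occ p i (k + 1) j =
      occ p i k 0 * p j + occ p i k (j + 1) / 2 + upPart (occ p i k) j / 2 := by
  have h1 : occ p i (k + 1) j = ∑' l : ℕ, occ p i k l * Ptrans p l j := rfl
  rw [h1]
  generalize occ p i k = a
  have h := ((hasSum_ite_eq (0 : ℕ) (a 0 * p j)).add
    (hasSum_ite_eq (j + 1) (a (j + 1) / 2))).add
    (hasSum_ite_eq (j - 1) (upPart a j / 2))
  rw [← h.tsum_eq]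
  congr 1
  funext l
  rcases l with _ | l
  · rcases j with _ | _ | j <;> simp [Ptrans, upPart]
  · rcases j with _ | _ | j
    · by_cases h : l = 0
      · subst h; simp [Ptrans, upPart]; ring
      · have : ¬ (0 = l) := fun h' => h h'.symm
        simp [Ptrans, upPart, h, this]
    · by_cases h : l = 1
      · subst h; simp [Ptrans, upPart]; ring
      · have : ¬ (1 = l) := fun h' => h h'.symm
        simp [Ptrans, upPart, h, this]
    · by_cases h : l = j + 2
      · subst h; simp [Ptrans, upPart]; ring
      · by_cases h' : l = j
        · subst h'; simp [Ptrans, upPart]; ring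
        · have e1 : ¬ (j + 2 = l) := fun h' => h h'.symm
          have e2 : ¬ (j = l) := fun h => h' h.symm
          simp [Ptrans, upPart, h, h', e1, e2]

theorem occ_nonneg (p : ℕ → ℝ) (hp0 : ∀ j, 0 ≤ p j) (i k : ℕ) : ∀ j, 0 ≤ occ p i k j := by
  induction k with
  | zero => intro j; simp only [occ]; split_ifs <;> norm_num
  | succ k ih =>
    intro j
    rw [occ_succ_eq]
    have h1 := mul_nonneg (ih 0) (hp0 j)
    have h2 := ih (j + 1)
    have h3 : 0 ≤ upPart (occ p i k) j := by
      rcases j with _ | _ | j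
      · simp [upPart]
      · simp [upPart]
      · exact ih (j + 1)
    positivity

theorem hasSum_step (p : ℕ → ℝ) (i k : ℕ) (x A Q : ℝ) (hx : 0 < x)
    (hQ : HasSum (fun j => p j * x ^ j) Q)
    (hA : HasSum (fun j => occ p i k j * x ^ j) A) :
    HasSum (fun j => occ p i (k + 1) j * x ^ j)
      (occ p i k 0 * Q + (A - occ p i k 0) / x / 2 + x * (A - occ p i k 0) / 2) := by
  have hs : HasSum (fun j => occ p i k (j + 1) * x ^ (j + 1)) (A - occ p i k 0) := by
    have := (hasSum_nat_add_iff' 1).2 hA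
    simpa using this
  have hd : HasSum (fun j => occ p i k (j + 1) * x ^ j) ((A - occ p i k 0) / x) := by
    have := hs.div_const x
    refine hs_congr ?_ (this)
    intro j
    field_simp
    ring
  have hu : HasSum (fun j => upPart (occ p i k) j * x ^ j) (x * (A - occ p i k 0)) := by
    rw [← hasSum_nat_add_iff' 2]
    have := hs.mul_left x
    simp only [Finset.sum_range_succ, Finset.sum_range_zero, upPart]
    simp only [zero_mul, add_zero, sub_zero]
    refine hs_congr ?_ (this)
    intro j
    ring
  have := ((hQ.mul_left (occ p i k 0)).add (hd.div_const 2)).add (hu.div_const 2)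
  refine hs_congr ?_ (this)
  intro j
  rw [occ_succ_eq]
  ring

theorem stmt10 (p : ℕ → ℝ) (hp0 : ∀ j, 0 ≤ p j) (hpsum : Summable p)
    (hp1 : ∑' j : ℕ, p j ≤ 1) (hp00 : p 0 = 0)
    (i : ℕ) (m : ℕ) (hm : 0 < m) :
    ∑ k ∈ Finset.range m, occ p i k 0 ≤
      Real.exp 1 / Real.sqrt (1 - Real.exp (-2 / (m : ℝ))) := by
  have hm' : (0 : ℝ) < m := by exact_mod_cast hm
  obtain ⟨s, hs⟩ : ∃ s, s = Real.exp (-1 / (m : ℝ)) := ⟨_, rfl⟩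
  have hs0 : 0 < s := hs ▸ Real.exp_pos _
  have hs1 : s < 1 := by
    rw [hs, Real.exp_lt_one_iff]
    exact div_neg_of_neg_of_pos (by norm_num) hm'
  have hs2 : Real.exp (-2 / (m : ℝ)) = s ^ 2 := by
    rw [hs, ← Real.exp_nat_mul]; congr 1; push_cast; ring
  have hsm : s ^ m = Real.exp (-1) := by
    rw [hs, ← Real.exp_nat_mul]; congr 1; field_simp
  rw [hs2]
  obtain ⟨r, hr⟩ : ∃ r, r = Real.sqrt (1 - s ^ 2) := ⟨_, rfl⟩
  have hpos : 0 < 1 - s ^ 2 := by nlinarith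
  have hr0 : 0 < r := hr ▸ Real.sqrt_pos.2 hpos
  have hrr : r ^ 2 = 1 - s ^ 2 := by rw [hr]; exact Real.sq_sqrt hpos.le
  rw [← hr]
  obtain ⟨x, hx⟩ : ∃ x, x = (1 - r) / s := ⟨_, rfl⟩
  have hsx : s * x = 1 - r := by rw [hx]; field_simp
  have hr1 : r < 1 := by nlinarith
  have hx0 : 0 < x := by rw [hx]; exact div_pos (by linarith) hs0
  have hx1 : x ≤ 1 := by
    rw [hx, div_le_one hs0]; nlinarith
  have hq : s * (x ^ 2 + 1) = 2 * x := by
    have : s * (s * (x ^ 2 + 1)) = s * (2 * x) := by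
      have : s * (s * (x ^ 2 + 1)) = (s * x) ^ 2 + s ^ 2 := by ring
      rw [this, hsx, show s * (2 * x) = 2 * (s * x) by ring, hsx]; nlinarith
    exact mul_left_cancel₀ hs0.ne' this
  have hle : ∀ j, p j * x ^ j ≤ p j * x := by
    intro j
    rcases j with _ | j
    · simp [hp00]
    · refine mul_le_mul_of_nonneg_left ?_ (hp0 _)
      exact pow_le_of_le_one hx0.le hx1 (Nat.succ_ne_zero j)
  have hQs : Summable (fun j => p j * x ^ j) :=
    Summable.of_nonneg_of_le (fun j => mul_nonneg (hp0 j) (by positivity)) hle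
      (hpsum.mul_right x)
  obtain ⟨Q, hQ⟩ := hQs
  have hQx : Q ≤ x := by
    have h1 := hasSum_le hle hQ (hpsum.hasSum.mul_right x)
    nlinarith
  have hex : ∀ k, ∃ A, HasSum (fun j => occ p i k j * x ^ j) A := by
    intro k
    induction k with
    | zero =>
      refine ⟨x ^ i, ?_⟩
      refine hs_congr ?_ ((hasSum_ite_eq i (x ^ i)))
      intro j
      simp only [occ]
      split_ifs with h
      · simp [h]
      · simp
    | succ k ih =>
      obtain ⟨A, hA⟩ := ih
      exact ⟨_, hasSum_step p i k x A Q hx0 hQ hA⟩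
  choose A hA using hex
  have hA0 : ∀ k, 0 ≤ A k := fun k =>
    (hA k).nonneg fun j => mul_nonneg (occ_nonneg p hp0 i k j) (by positivity)
  have hAz : A 0 ≤ 1 := by
    have : HasSum (fun j => occ p i 0 j * x ^ j) (x ^ i) := by
      refine hs_congr ?_ ((hasSum_ite_eq i (x ^ i)))
      intro j
      simp only [occ]
      split_ifs with h
      · simp [h]
      · simp
    rw [(hA 0).unique this]
    exact pow_le_one₀ hx0.le hx1
  have hstep : ∀ k, s * A (k + 1) ≤ A k - occ p i k 0 * r := by
    intro k
    have h := (hA (k + 1)).unique (hasSum_step p i k x (A k) Q hx0 hQ (hA k))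
    have ho := occ_nonneg p hp0 i k 0
    have h2 : s * ((A k - occ p i k 0) / x / 2 + x * (A k - occ p i k 0) / 2)
        = A k - occ p i k 0 := by
      have : s * ((A k - occ p i k 0) / x / 2 + x * (A k - occ p i k 0) / 2)
        = (s * (x ^ 2 + 1)) * (A k - occ p i k 0) / (2 * x) := by field_simp; ring
      rw [this, hq]; field_simp
    have h3 : s * (occ p i k 0 * Q) ≤ occ p i k 0 * (1 - r) := by
      rw [← hsx]
      have := mul_le_mul_of_nonneg_left hQx (mul_nonneg hs0.le ho)
      nlinarith
    rw [h]
    nlinarith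
  have htel : ∀ n, r * ∑ k ∈ Finset.range n, s ^ k * occ p i k 0 ≤ A 0 - s ^ n * A n := by
    intro n
    induction n with
    | zero => simp
    | succ n ih =>
      rw [Finset.sum_range_succ, mul_add, pow_succ]
      have := mul_le_mul_of_nonneg_left (hstep n) (pow_nonneg hs0.le n)
      nlinarith
  have h1 : s ^ m * ∑ k ∈ Finset.range m, occ p i k 0
      ≤ ∑ k ∈ Finset.range m, s ^ k * occ p i k 0 := by
    rw [Finset.mul_sum]
    refine Finset.sum_le_sum fun k hk => ?_
    refine mul_le_mul_of_nonneg_right ?_ (occ_nonneg p hp0 i k 0)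
    exact pow_le_pow_of_le_one hs0.le hs1.le (Finset.mem_range.1 hk).le
  have h2 := htel m
  have h3 := mul_nonneg (pow_nonneg hs0.le m) (hA0 m)
  have h4 : r * (s ^ m * ∑ k ∈ Finset.range m, occ p i k 0) ≤ 1 :=
    (mul_le_mul_of_nonneg_left h1 hr0.le).trans (by linarith)
  rw [hsm] at h4
  rw [le_div_iff₀ hr0]
  have h5 : Real.exp 1 * Real.exp (-1) = 1 := by rw [← Real.exp_add]; simp
  have h6 := mul_le_mul_of_nonneg_left h4 (Real.exp_pos 1).le
  calc (∑ k ∈ Finset.range m, occ p i k 0) * r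
      = (Real.exp 1 * Real.exp (-1)) * (∑ k ∈ Finset.range m, occ p i k 0) * r := by
        rw [h5]; ring
    _ = Real.exp 1 * (r * (Real.exp (-1) * ∑ k ∈ Finset.range m, occ p i k 0)) := by ring
    _ ≤ Real.exp 1 * 1 := h6
    _ = Real.exp 1 := mul_one _
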